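/- Let α be a type and let A, B be lists over α, both of length ℓ. Then for every m ≥ 1, the length of S_{A,B}(m) satisfies |S(m)| = ℓ · d(2m−1), where d is Stern's diatomic sequence. -/

import Mathlib

/-- Stern's diatomic sequence. -/
def stern : ℕ → ℕ
  | 0 => 0
  | 1 => 1
  | n + 2 =>
    if (n + 2) % 2 = 0 then stern ((n + 2) / 2)
    else stern ((n + 2) / 2) + stern ((n + 2) / 2 + 1)
decreasing_by all_goals omega

/-- OEIS A003602: a(1)=1, a(2n)=a(n), a(2n+1)=n+1. (a(0)=0 as junk value.) -/
def aseq : ℕ → ℕ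
  | 0 => 0
  | 1 => 1
  | n + 2 =>
    if (n + 2) % 2 = 0 then aseq ((n + 2) / 2)
    else (n + 2) / 2 + 1
decreasing_by all_goals omega

-- the modified sequence `a*`: zero at powers of two.
open Classical in
noncomputable def aStar (j : ℕ) : ℕ :=
  if ∃ k, j = 2 ^ k then 0 else aseq j

theorem aseq_le (n : ℕ) : aseq n ≤ n := by
  induction n using Nat.strong_induction_on with
  | _ n ih =>
    match n with
    | 0 => simp [aseq]
    | 1 => simp [aseq]
    | m + 2 =>
      rw [aseq]
      split
      · exact le_trans (ih ((m + 2) / 2) (by omega)) (by omega)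
      · omega

theorem aStar_le (j : ℕ) : aStar j ≤ j := by
  unfold aStar
  split
  · omega
  · exact aseq_le j

/-- The Markov-type sequence `S_{A,B}(n)`. -/
noncomputable def mseq {α : Type*} (A B : List α) : ℕ → List α
  | 0 => A
  | 1 => B
  | 2 => A ++ B
  | n + 3 =>
    if (n + 3) % 2 = 0 then
      mseq A B ((n + 3) / 2) ++ mseq A B (aseq ((n + 3) / 2))
    else
      mseq A B (aStar ((n + 4) / 2 - 1)) ++ mseq A B ((n + 4) / 2)
decreasing_by
  all_goals first
    | omega
    | exact lt_of_le_of_lt (aseq_le _) (by omega)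
    | exact lt_of_le_of_lt (aStar_le _) (by omega)

/-!
For every `n ≥ 1` the two concatenation rules collapse to `S(n + 1) = S(a*(n)) ⊕ S(a(n + 1))`.
Since `a(2n + 1) = n + 1`, `a(2n) = a(n)`, and replacing `a*` by `a` does not affect lengths when
`|A| = |B|`, the function `n ↦ |S(a(n))|` satisfies Stern's recurrence; hence it is a multiple of
`d`, and the theorem is its value at `2m - 1`.
-/

theorem stern_two_mul (n : ℕ) : stern (2 * n) = stern n := by
  cases n with
  | zero => rfl
  | succ k =>
    rw [Nat.mul_succ, stern, if_pos (by omega), show (2 * k + 2) / 2 = k + 1 by omega]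

theorem stern_two_mul_add_one (n : ℕ) : stern (2 * n + 1) = stern n + stern (n + 1) := by
  cases n with
  | zero => simp [stern]
  | succ k =>
    rw [show 2 * (k + 1) + 1 = 2 * k + 1 + 2 by omega, stern, if_neg (by omega),
      show (2 * k + 1 + 2) / 2 = k + 1 by omega]

theorem eq_stern_nsmul_of_recurrence {M : Type*} [AddCommMonoid M] {f : ℕ → M}
    (even : ∀ n, f (2 * n) = f n)
    (odd : ∀ n, 1 ≤ n → f (2 * n + 1) = f n + f (n + 1)) {n : ℕ} (hn : 1 ≤ n) :
    f n = stern n • f 1 := by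
  induction n using Nat.strong_induction_on with
  | _ n ih =>
    obtain ⟨k, rfl | rfl⟩ := n.even_or_odd'
    · rw [even, ih k (by omega) (by omega), stern_two_mul]
    · obtain rfl | hk := k.eq_zero_or_pos
      · simp [stern]
      · rw [odd k hk, ih k (by omega) hk, ih (k + 1) (by omega) (by omega),
          stern_two_mul_add_one, add_nsmul]

theorem aseq_two_mul (n : ℕ) : aseq (2 * n) = aseq n := by
  cases n with
  | zero => rfl
  | succ k =>
    rw [Nat.mul_succ, aseq, if_pos (by omega), show (2 * k + 2) / 2 = k + 1 by omega]

theorem aseq_two_mul_add_one (n : ℕ) : aseq (2 * n + 1) = n + 1 := by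
  cases n with
  | zero => simp [aseq]
  | succ k =>
    rw [show 2 * (k + 1) + 1 = 2 * k + 1 + 2 by omega, aseq, if_neg (by omega)]
    omega

theorem aseq_two_pow (k : ℕ) : aseq (2 ^ k) = 1 := by
  induction k with
  | zero => exact aseq_two_mul_add_one 0
  | succ k ih => rw [pow_succ', aseq_two_mul, ih]

theorem aStar_two_pow (k : ℕ) : aStar (2 ^ k) = 0 :=
  if_pos ⟨k, rfl⟩

theorem aStar_eq_aseq {n : ℕ} (hn : ∀ k, n ≠ 2 ^ k) : aStar n = aseq n :=
  if_neg (not_exists.mpr hn)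

theorem aStar_two_mul (n : ℕ) : aStar (2 * n) = aStar n := by
  by_cases hn : ∃ k, n = 2 ^ k
  · obtain ⟨k, rfl⟩ := hn
    rw [← pow_succ', aStar_two_pow, aStar_two_pow]
  · have not_two_pow : ∀ k, 2 * n ≠ 2 ^ k := by
      rintro (_ | k) h
      · omega
      · exact hn ⟨k, by rw [pow_succ'] at h; omega⟩
    rw [aStar_eq_aseq not_two_pow, aStar_eq_aseq (not_exists.mp hn), aseq_two_mul]

theorem aStar_two_mul_add_one {n : ℕ} (hn : 1 ≤ n) : aStar (2 * n + 1) = n + 1 := by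
  have not_two_pow : ∀ k, 2 * n + 1 ≠ 2 ^ k := by
    rintro (_ | k) h
    · omega
    · rw [pow_succ'] at h; omega
  rw [aStar_eq_aseq not_two_pow, aseq_two_mul_add_one]

section mseq

variable {α : Type*} (A B : List α)

theorem mseq_two_mul {n : ℕ} (hn : 2 ≤ n) :
    mseq A B (2 * n) = mseq A B n ++ mseq A B (aseq n) := by
  obtain ⟨k, rfl⟩ := Nat.exists_eq_add_of_le' hn
  rw [show 2 * (k + 2) = 2 * k + 1 + 3 by omega, mseq, if_pos (by omega),
    show (2 * k + 1 + 3) / 2 = k + 2 by omega]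

theorem mseq_two_mul_add_one {n : ℕ} (hn : 1 ≤ n) :
    mseq A B (2 * n + 1) = mseq A B (aStar n) ++ mseq A B (n + 1) := by
  obtain ⟨k, rfl⟩ := Nat.exists_eq_add_of_le' hn
  rw [show 2 * (k + 1) + 1 = 2 * k + 3 by omega, mseq, if_neg (by omega),
    show (2 * k + 4) / 2 = k + 1 + 1 by omega, Nat.add_sub_cancel_right]

theorem mseq_succ {n : ℕ} (hn : 1 ≤ n) :
    mseq A B (n + 1) = mseq A B (aStar n) ++ mseq A B (aseq (n + 1)) := by
  obtain ⟨k, rfl | rfl⟩ := n.even_or_odd'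
  · rw [mseq_two_mul_add_one A B (by omega), aStar_two_mul, aseq_two_mul_add_one]
  · obtain rfl | hk := k.eq_zero_or_pos
    · have aStar_one : aStar 1 = 0 := aStar_two_pow 0
      have aseq_two : aseq 2 = 1 := aseq_two_pow 1
      simp [aStar_one, aseq_two, mseq]
    · rw [show 2 * k + 1 + 1 = 2 * (k + 1) by omega, mseq_two_mul A B (by omega),
        aStar_two_mul_add_one hk, aseq_two_mul]

variable {A B}

theorem length_mseq_aStar (h : A.length = B.length) (n : ℕ) :
    (mseq A B (aStar n)).length = (mseq A B (aseq n)).length := by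
  by_cases hn : ∃ k, n = 2 ^ k
  · obtain ⟨k, rfl⟩ := hn
    simpa only [aStar_two_pow, aseq_two_pow, mseq] using h
  · rw [aStar_eq_aseq (not_exists.mp hn)]

theorem length_mseq_aseq (h : A.length = B.length) {n : ℕ} (hn : 1 ≤ n) :
    (mseq A B (aseq n)).length = stern n * B.length := by
  have even (k : ℕ) : (mseq A B (aseq (2 * k))).length = (mseq A B (aseq k)).length := by
    rw [aseq_two_mul]
  have odd (k : ℕ) (hk : 1 ≤ k) :
      (mseq A B (aseq (2 * k + 1))).length =
        (mseq A B (aseq k)).length + (mseq A B (aseq (k + 1))).length := by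
    rw [aseq_two_mul_add_one, mseq_succ A B hk, List.length_append, length_mseq_aStar h]
  have one : mseq A B (aseq 1) = B := by simp [aseq, mseq]
  simpa only [one, smul_eq_mul] using
    eq_stern_nsmul_of_recurrence (f := fun k ↦ (mseq A B (aseq k)).length) even odd hn

end mseq

/-- if `A` and `B` both have length `ℓ`, then for every `m ≥ 1`,
`|S(m)| = ℓ · d(2m−1)`. -/
theorem stmt7 {α : Type*} (A B : List α) (ℓ : ℕ) (hA : A.length = ℓ) (hB : B.length = ℓ)
    (m : ℕ) (hm : 1 ≤ m) :
    (mseq A B m).length = ℓ * stern (2 * m - 1) := by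
  obtain ⟨k, rfl⟩ := Nat.exists_eq_add_of_le' hm
  have index : 2 * (k + 1) - 1 = 2 * k + 1 := by omega
  calc (mseq A B (k + 1)).length
      = (mseq A B (aseq (2 * k + 1))).length := by rw [aseq_two_mul_add_one]
    _ = stern (2 * k + 1) * B.length := length_mseq_aseq (hA.trans hB.symm) (by omega)
    _ = ℓ * stern (2 * (k + 1) - 1) := by rw [hB, index, mul_comm]
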